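/- arXiv:1411.0882 — 4 statements merged into one kernel-verified Lean document; each statement's English description precedes it below -/
import Mathlib

section
/- Let A, B, C be affinely independent points in the Euclidean plane ℝ², write a = dist(B,C), b = dist(C,A), c = dist(A,B), let s = (a+b+c)/2 be the semiperimeter, let γ be the interior angle at the vertex C (the Euclidean angle ∠(A,C,B)), and let r be the inradius of the triangle ABC. Then r = (s − c)·tan(γ/2) (the law of cotangents). -/
open Real EuclideanGeometry Metric

/-- The triangular region determined by three points in the plane:
the convex hull of the vertex set. -/
def triangleRegion (A B C : EuclideanSpace ℝ (Fin 2)) : Set (EuclideanSpace ℝ (Fin 2)) :=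
  convexHull ℝ {A, B, C}

/-- The inradius of the triangle with vertices `A`, `B`, `C`: the supremum of all
radii `r ≥ 0` such that some closed ball of radius `r` is contained in the
triangular region. -/
noncomputable def triangleInradius (A B C : EuclideanSpace ℝ (Fin 2)) : ℝ :=
  sSup {r : ℝ | 0 ≤ r ∧ ∃ c : EuclideanSpace ℝ (Fin 2),
    closedBall c r ⊆ triangleRegion A B C}

namespace LOC

abbrev Pt := EuclideanSpace ℝ (Fin 2)

def cr (P Q R : Pt) : ℝ := (Q 0 - P 0) * (R 1 - P 1) - (Q 1 - P 1) * (R 0 - P 0)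

lemma dist_sq (P Q : Pt) : dist P Q ^ 2 = (P 0 - Q 0) ^ 2 + (P 1 - Q 1) ^ 2 := by
  rw [EuclideanSpace.dist_eq, Real.sq_sqrt (by positivity)]
  simp [Fin.sum_univ_two, Real.dist_eq, sq_abs]

lemma convex_half (s : ℝ) (Q R : Pt) : Convex ℝ {P : Pt | 0 ≤ s * cr P Q R} := by
  intro x hx y hy a b ha hb hab
  simp only [Set.mem_setOf_eq] at *
  have : s * cr (a • x + b • y) Q R = a * (s * cr x Q R) + b * (s * cr y Q R) := by
    have hb' : b = 1 - a := by linarith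
    subst hb'
    simp [cr]
    ring
  rw [this]
  positivity

lemma region (s : ℝ) (A B C : Pt) (hs : 0 < s * cr A B C) (P : Pt) :
    P ∈ convexHull ℝ {A, B, C} ↔
      0 ≤ s * cr P B C ∧ 0 ≤ s * cr P C A ∧ 0 ≤ s * cr P A B := by
  constructor
  · intro hP
    have key : convexHull ℝ {A, B, C} ⊆ {P : Pt | 0 ≤ s * cr P B C} ∩
        ({P : Pt | 0 ≤ s * cr P C A} ∩ {P : Pt | 0 ≤ s * cr P A B}) := by
      apply convexHull_min
      · have e1 : cr B C A = cr A B C := by simp only [cr]; ring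
        have e2 : cr C A B = cr A B C := by simp only [cr]; ring
        have e3 : ∀ X Y : Pt, cr X X Y = 0 := by intro X Y; simp only [cr]; ring
        have e4 : ∀ X Y : Pt, cr X Y X = 0 := by intro X Y; simp only [cr]; ring
        rintro x (rfl | rfl | rfl) <;>
          simp [e1, e2, e3, e4, hs.le]
      · exact (convex_half s B C).inter ((convex_half s C A).inter (convex_half s A B))
    exact key hP
  · rintro ⟨h1, h2, h3⟩
    have hsum : s * cr P B C + s * cr P C A + s * cr P A B = s * cr A B C := by
      simp only [cr]; ring
    have hc := convex_convexHull ℝ ({A, B, C} : Set Pt)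
    have hm := hc.sum_mem (t := Finset.univ)
      (w := ![s * cr P B C / (s * cr A B C), s * cr P C A / (s * cr A B C),
        s * cr P A B / (s * cr A B C)]) (z := ![A, B, C])
      (by intro i _; fin_cases i <;> simp <;> positivity)
      (by simp [Fin.sum_univ_three]; rw [← add_div, ← add_div, hsum, div_self hs.ne'])
      (by
        intro i _
        apply subset_convexHull
        fin_cases i <;> simp)
    convert hm using 1
    have hs0 : s ≠ 0 := by rintro rfl; simp at hs
    have hc0 : cr A B C ≠ 0 := by intro h; simp [h] at hs
    ext i
    simp only [Fin.sum_univ_three]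
    fin_cases i
    · simp
      field_simp
      simp only [cr]; ring
    · simp
      field_simp
      simp only [cr]; ring

lemma half_le (s : ℝ) (hs : s ^ 2 = 1) (c Q R : Pt) (r : ℝ) (hr : 0 ≤ r) (hQR : Q ≠ R)
    (h : ∀ P ∈ Metric.closedBall c r, 0 ≤ s * cr P Q R) : r * dist Q R ≤ s * cr c Q R := by
  have hd : 0 < dist Q R := dist_pos.2 hQR
  have hd2 := dist_sq Q R
  set d := dist Q R
  let P : Pt := !₂[c 0 - s * r / d * (Q 1 - R 1), c 1 + s * r / d * (Q 0 - R 0)]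
  have hP : P ∈ Metric.closedBall c r := by
    rw [Metric.mem_closedBall]
    apply abs_le_of_sq_le_sq' _ hr |>.2
    rw [dist_sq]
    simp only [P]
    simp
    have : (s * r / d * (Q 1 - R 1)) ^ 2 + (s * r / d * (Q 0 - R 0)) ^ 2 = r ^ 2 := by
      have : (s * r / d * (Q 1 - R 1)) ^ 2 + (s * r / d * (Q 0 - R 0)) ^ 2
        = s ^ 2 * r ^ 2 / d ^ 2 * ((Q 0 - R 0) ^ 2 + (Q 1 - R 1) ^ 2) := by field_simp; ring
      rw [this, ← hd2, hs]; field_simp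
    linarith
  have := h P hP
  have e : s * cr P Q R = s * cr c Q R - s ^ 2 * (r / d) * ((Q 0 - R 0) ^ 2 + (Q 1 - R 1) ^ 2) := by
    simp [cr, P]; ring
  rw [e, hs, ← hd2] at this
  have e2 : 1 * (r / d) * d ^ 2 = r * d := by field_simp
  linarith

lemma half_ge (s : ℝ) (hs : s ^ 2 = 1) (c Q R P : Pt) (r : ℝ)
    (hP : P ∈ Metric.closedBall c r) (h : r * dist Q R ≤ s * cr c Q R) : 0 ≤ s * cr P Q R := by
  rw [Metric.mem_closedBall] at hP
  have h1 : s * cr c Q R - s * cr P Q R ≤ dist P c * dist Q R := by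
    apply abs_le_of_sq_le_sq' _ (by positivity) |>.2
    rw [mul_pow, dist_sq, dist_sq, ← mul_sub, mul_pow, hs]
    simp only [cr]
    nlinarith [sq_nonneg ((P 0 - c 0) * (Q 0 - R 0) + (P 1 - c 1) * (Q 1 - R 1))]
  have h2 : dist P c * dist Q R ≤ r * dist Q R := by gcongr
  linarith

lemma cr_ne (A B C : Pt) (h : AffineIndependent ℝ ![A, B, C]) : cr A B C ≠ 0 := by
  intro h0
  have hBC : B ≠ C := by
    intro e
    have := h.injective (a₁ := 1) (a₂ := 2) (by simpa using e)
    simp at this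
  rw [affineIndependent_iff] at h
  have key : ∀ P : Pt, cr P B C = 0 := by
    intro P
    have := h Finset.univ ![cr P B C, cr P C A, cr P A B]
      (by simp [Fin.sum_univ_three]; rw [← h0]; simp only [cr]; ring)
      (by
        ext i
        simp only [Fin.sum_univ_three]
        fin_cases i
        · simp
          have : cr P B C * A 0 + cr P C A * B 0 + cr P A B * C 0 = cr A B C * P 0 := by
            simp only [cr]; ring
          rw [this, h0, zero_mul]
        · simp
          have : cr P B C * A 1 + cr P C A * B 1 + cr P A B * C 1 = cr A B C * P 1 := by
            simp only [cr]; ring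
          rw [this, h0, zero_mul]) 0 (by simp)
    simpa using this
  have := key !₂[B 0 - (C 1 - B 1), B 1 + (C 0 - B 0)]
  have e : dist B C ^ 2 = 0 := by
    rw [dist_sq]
    simp [cr] at this
    linarith
  exact hBC (by simpa using e)

lemma inradius_eq (A B C : Pt) (h : AffineIndependent ℝ ![A, B, C]) :
    triangleInradius A B C = |cr A B C| / (dist B C + dist C A + dist A B) := by
  have hD := cr_ne A B C h
  have hBC : B ≠ C := by rintro rfl; apply hD; simp only [cr]; ring
  have hCA : C ≠ A := by rintro rfl; apply hD; simp only [cr]; ring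
  have hAB : A ≠ B := by rintro rfl; apply hD; simp only [cr]; ring
  have p1 := dist_pos.2 hBC
  have p2 := dist_pos.2 hCA
  have p3 := dist_pos.2 hAB
  obtain ⟨s, hs, hsD⟩ : ∃ s : ℝ, s ^ 2 = 1 ∧ s * cr A B C = |cr A B C| := by
    rcases abs_choice (cr A B C) with e | e
    · exact ⟨1, by norm_num, by rw [e]; ring⟩
    · exact ⟨-1, by norm_num, by rw [e]; ring⟩
  have hpos : 0 < s * cr A B C := by rw [hsD]; exact abs_pos.2 hD
  rw [← hsD]
  apply IsGreatest.csSup_eq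
  constructor
  · refine ⟨by positivity, ?_⟩
    set a := dist B C
    set b := dist C A
    set c := dist A B
    refine ⟨(a + b + c)⁻¹ • (a • A + b • B + c • C), ?_⟩
    intro P hP
    rw [triangleRegion, region s A B C hpos]
    have hp : a + b + c ≠ 0 := by positivity
    refine ⟨half_ge s hs _ _ _ _ _ hP (le_of_eq ?_), half_ge s hs _ _ _ _ _ hP (le_of_eq ?_),
      half_ge s hs _ _ _ _ _ hP (le_of_eq ?_)⟩
    · change _ * a = _
      simp [cr]
      field_simp
      ring
    · change _ * b = _
      simp [cr]
      field_simp
      ring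
    · change _ * c = _
      simp [cr]
      field_simp
      ring
  · rintro r ⟨hr, c, hc⟩
    have hc' : ∀ P ∈ closedBall c r, _ := fun P hP => (region s A B C hpos P).1 (hc hP)
    have h1 := half_le s hs c B C r hr hBC fun P hP => (hc' P hP).1
    have h2 := half_le s hs c C A r hr hCA fun P hP => (hc' P hP).2.1
    have h3 := half_le s hs c A B r hr hAB fun P hP => (hc' P hP).2.2
    rw [le_div_iff₀ (by positivity)]
    have hsum : s * cr c B C + s * cr c C A + s * cr c A B = s * cr A B C := by
      simp only [cr]; ring
    linarith

lemma tan_half (x : ℝ) (h : 1 + cos x ≠ 0) : tan (x / 2) = sin x / (1 + cos x) := by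
  have e1 : cos x = 2 * cos (x / 2) ^ 2 - 1 := by rw [← Real.cos_two_mul]; ring_nf
  have e2 : sin x = 2 * sin (x / 2) * cos (x / 2) := by rw [← Real.sin_two_mul]; ring_nf
  rw [e1] at h
  have h0 : cos (x / 2) ≠ 0 := by intro h0; apply h; rw [h0]; ring
  rw [e1, e2, Real.tan_eq_sin_div_cos]
  have : 1 + (2 * cos (x / 2) ^ 2 - 1) = 2 * cos (x / 2) ^ 2 := by ring
  rw [this]
  field_simp

end LOC

/-- The law of cotangents: `r = (s - c) · tan (γ/2)`, where `s` is the
semiperimeter, `c = dist A B`, and `γ` is the interior angle at `C`. -/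
theorem law_of_cotangents (A B C : EuclideanSpace ℝ (Fin 2))
    (h : AffineIndependent ℝ ![A, B, C]) :
    triangleInradius A B C =
      ((dist B C + dist C A + dist A B) / 2 - dist A B) *
        Real.tan (EuclideanGeometry.angle A C B / 2) := by
  have hD := LOC.cr_ne A B C h
  rw [LOC.inradius_eq A B C h]
  have hBC : B ≠ C := by rintro rfl; apply hD; simp only [LOC.cr]; ring
  have hCA : C ≠ A := by rintro rfl; apply hD; simp only [LOC.cr]; ring
  have p1 := dist_pos.2 hBC
  have p2 := dist_pos.2 hCA
  have p3 : 0 ≤ dist A B := dist_nonneg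
  have q1 := LOC.dist_sq B C
  have q2 := LOC.dist_sq C A
  have q3 := LOC.dist_sq A B
  have hcos := EuclideanGeometry.law_cos A C B
  rw [dist_comm A C] at hcos
  have hsin0 : 0 ≤ sin (∠ A C B) :=
    Real.sin_nonneg_of_nonneg_of_le_pi (EuclideanGeometry.angle_nonneg _ _ _)
      (EuclideanGeometry.angle_le_pi _ _ _)
  have hsc := Real.sin_sq_add_cos_sq (∠ A C B)
  set x := ∠ A C B
  have hDsq : (LOC.cr A B C) ^ 2 = (dist B C * dist C A * sin x) ^ 2 := by
    have e1 : dist B C * dist C A * cos x =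
        (B 0 - C 0) * (A 0 - C 0) + (B 1 - C 1) * (A 1 - C 1) := by nlinarith
    have e2 : (dist B C * dist C A * sin x) ^ 2 =
        dist B C ^ 2 * dist C A ^ 2 - (dist B C * dist C A * cos x) ^ 2 := by
      linear_combination (dist B C * dist C A) ^ 2 * hsc
    rw [e2, e1, q1, q2]
    simp only [LOC.cr]
    ring
  have hDabs : |LOC.cr A B C| = dist B C * dist C A * sin x := by
    rw [← Real.sqrt_sq_eq_abs, hDsq, Real.sqrt_sq (by positivity)]
  have hsin : sin x ≠ 0 := by
    intro h0
    rw [h0] at hDabs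
    simp at hDabs
    exact hD hDabs
  have h1 : 1 + cos x ≠ 0 := by
    intro h0
    apply hsin
    have : cos x = -1 := by linarith
    rw [this] at hsc
    nlinarith
  rw [LOC.tan_half x h1, hDabs]
  have hp : dist B C + dist C A + dist A B ≠ 0 := by positivity
  field_simp
  linear_combination hcos
end

section
/- Let θ be a real number with 0 < θ ≤ π/3, and let A, B, C be affinely independent points in the Euclidean plane ℝ² such that all three interior angles of the triangle ABC are at least θ. Then the diameter of the triangular region is at most 2·cot(θ/2) times the inradius of the triangle. -/
open Real EuclideanGeometry Metric

open InnerProductGeometry in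
lemma aux_sin (x y : EuclideanSpace ℝ (Fin 2)) :
    Real.sin (InnerProductGeometry.angle x y) * (‖x‖ * ‖y‖) = |x 0 * y 1 - x 1 * y 0| := by
  rw [sin_angle_mul_norm_mul_norm, ← Real.sqrt_sq_eq_abs]
  congr 1
  simp only [PiLp.inner_apply, Fin.sum_univ_two, RCLike.inner_apply, conj_trivial]
  ring

open InnerProductGeometry in
lemma aux_cot (θ : ℝ) (hθ₀ : 0 < θ) (x y : EuclideanSpace ℝ (Fin 2))
    (h : θ ≤ InnerProductGeometry.angle x y) :
    ‖x‖ * ‖y‖ + inner ℝ x y ≤ Real.cot (θ / 2) * |x 0 * y 1 - x 1 * y 0| := by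
  rw [← aux_sin, ← cos_angle_mul_norm_mul_norm]
  have hpi := InnerProductGeometry.angle_le_pi x y
  have hpp := Real.pi_pos
  set φ := InnerProductGeometry.angle x y
  have hN : 0 ≤ ‖x‖ * ‖y‖ := by positivity
  have key : 1 + Real.cos φ ≤ Real.cot (θ / 2) * Real.sin φ := by
    have hs : 0 < Real.sin (θ / 2) := Real.sin_pos_of_pos_of_lt_pi (by linarith) (by linarith [Real.pi_pos])
    have hc : 0 ≤ Real.cos (φ / 2) := Real.cos_nonneg_of_neg_pi_div_two_le_of_le (by linarith) (by linarith)
    have hd : 0 ≤ Real.sin (φ / 2 - θ / 2) := Real.sin_nonneg_of_nonneg_of_le_pi (by linarith) (by linarith)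
    rw [Real.sin_sub] at hd
    have e1 : Real.sin φ = 2 * Real.sin (φ / 2) * Real.cos (φ / 2) := by
      rw [← Real.sin_two_mul]; congr 1; ring
    have e2 : Real.cos φ = 2 * Real.cos (φ / 2) ^ 2 - 1 := by
      rw [← Real.cos_two_mul]; congr 1; ring
    rw [Real.cot_eq_cos_div_sin, div_mul_eq_mul_div, le_div_iff₀ hs, e1, e2]
    nlinarith [mul_nonneg hc hd]
  nlinarith [mul_le_mul_of_nonneg_right key hN]

lemma aux_side (θ : ℝ) (hθ₀ : 0 < θ) (A B C : EuclideanSpace ℝ (Fin 2))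
    (hB : θ ≤ EuclideanGeometry.angle A B C) (hC : θ ≤ EuclideanGeometry.angle A C B) :
    dist B C * (dist B C + dist A C + dist A B) ≤ 2 * Real.cot (θ / 2) *
      |(B 0 - A 0) * (C 1 - A 1) - (B 1 - A 1) * (C 0 - A 0)| := by
  have h1 := aux_cot θ hθ₀ _ _ hB
  have h2 := aux_cot θ hθ₀ _ _ hC
  have e : inner ℝ (A -ᵥ B) (C -ᵥ B) + inner ℝ (A -ᵥ C) (B -ᵥ C) = dist B C ^ 2 := by
    rw [EuclideanSpace.dist_eq, Real.sq_sqrt (by positivity)]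
    simp only [PiLp.inner_apply, Fin.sum_univ_two, RCLike.inner_apply, conj_trivial,
      vsub_eq_sub, PiLp.sub_apply, Real.dist_eq, sq_abs]
    ring
  rw [← dist_eq_norm_vsub, ← dist_eq_norm_vsub] at h1 h2
  have d1 : |(A -ᵥ B) 0 * (C -ᵥ B) 1 - (A -ᵥ B) 1 * (C -ᵥ B) 0| =
      |(B 0 - A 0) * (C 1 - A 1) - (B 1 - A 1) * (C 0 - A 0)| := by
    rw [← abs_neg]; congr 1; simp only [vsub_eq_sub, PiLp.sub_apply]; ring
  have d2 : |(A -ᵥ C) 0 * (B -ᵥ C) 1 - (A -ᵥ C) 1 * (B -ᵥ C) 0| =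
      |(B 0 - A 0) * (C 1 - A 1) - (B 1 - A 1) * (C 0 - A 0)| := by
    congr 1; simp only [vsub_eq_sub, PiLp.sub_apply]; ring
  rw [d1] at h1
  rw [d2] at h2
  rw [dist_comm C B] at h1
  nlinarith

lemma aux_cross (x y : EuclideanSpace ℝ (Fin 2)) :
    |x 0 * y 1 - x 1 * y 0| ≤ ‖x‖ * ‖y‖ := by
  rw [← aux_sin]
  nlinarith [Real.sin_le_one (InnerProductGeometry.angle x y),
    mul_nonneg (norm_nonneg x) (norm_nonneg y)]

lemma aux_mem (A B C P : EuclideanSpace ℝ (Fin 2)) (u v w : ℝ) (hu : 0 ≤ u) (hv : 0 ≤ v)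
    (hw : 0 ≤ w) (h1 : u + v + w = 1) (hP : u • A + v • B + w • C = P) :
    P ∈ triangleRegion A B C := by
  have hc := convex_convexHull ℝ ({A, B, C} : Set (EuclideanSpace ℝ (Fin 2)))
  have hA : A ∈ convexHull ℝ ({A, B, C} : Set (EuclideanSpace ℝ (Fin 2))) :=
    subset_convexHull ℝ _ (by simp)
  have hB : B ∈ convexHull ℝ ({A, B, C} : Set (EuclideanSpace ℝ (Fin 2))) :=
    subset_convexHull ℝ _ (by simp)
  have hC : C ∈ convexHull ℝ ({A, B, C} : Set (EuclideanSpace ℝ (Fin 2))) :=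
    subset_convexHull ℝ _ (by simp)
  have := hc.sum_mem (t := Finset.univ) (w := ![u, v, w]) (z := ![A, B, C])
    (by intro i _; fin_cases i <;> simpa) (by simpa [Fin.sum_univ_three] using h1)
    (by intro i _; fin_cases i <;> simpa)
  rw [triangleRegion, ← hP]
  simpa [Fin.sum_univ_three] using this

/-- nonnegativity of a perturbed barycentric coordinate -/
lemma aux_coord (x v : EuclideanSpace ℝ (Fin 2)) (D s a : ℝ) (hD : D ≠ 0) (hs : 0 < s)
    (ha : ‖x‖ = a) (hv : ‖v‖ ≤ |D| / s) :
    0 ≤ a / s + (v 0 * x 1 - v 1 * x 0) / D := by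
  have hD' : 0 < |D| := abs_pos.2 hD
  have h1 : |(v 0 * x 1 - v 1 * x 0) / D| ≤ a / s := by
    rw [abs_div, div_le_iff₀ hD']
    calc _ ≤ ‖v‖ * ‖x‖ := aux_cross v x
      _ ≤ |D| / s * ‖x‖ := by gcongr
      _ = _ := by rw [ha]; ring
  linarith [neg_le_of_abs_le h1]

lemma aux_ball (A B C : EuclideanSpace ℝ (Fin 2))
    (hD : (B 0 - A 0) * (C 1 - A 1) - (B 1 - A 1) * (C 0 - A 0) ≠ 0)
    (hs : 0 < dist B C + dist A C + dist A B) :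
    ∃ c, closedBall c (|(B 0 - A 0) * (C 1 - A 1) - (B 1 - A 1) * (C 0 - A 0)| /
      (dist B C + dist A C + dist A B)) ⊆ triangleRegion A B C := by
  set D := (B 0 - A 0) * (C 1 - A 1) - (B 1 - A 1) * (C 0 - A 0) with hDdef
  set s := dist B C + dist A C + dist A B with hsdef
  refine ⟨(dist B C / s) • A + (dist A C / s) • B + (dist A B / s) • C, ?_⟩
  intro P hP
  rw [mem_closedBall, dist_eq_norm] at hP
  obtain ⟨v, hv⟩ : ∃ v, P - ((dist B C / s) • A + (dist A C / s) • B + (dist A B / s) • C) = v :=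
    ⟨_, rfl⟩
  rw [hv] at hP
  have hPv : P = ((dist B C / s) • A + (dist A C / s) • B + (dist A B / s) • C) + v := by
    rw [← hv]; abel
  have hsum : dist B C / s + dist A C / s + dist A B / s = 1 := by
    rw [← add_div, ← add_div, ← hsdef, div_self hs.ne']
  have n1 := aux_coord (B - C) v D s (dist B C) hD hs (by rw [dist_eq_norm]) hP
  have n2 := aux_coord (C - A) v D s (dist A C) hD hs (by rw [dist_eq_norm, norm_sub_rev]) hP
  have n3 := aux_coord (A - B) v D s (dist A B) hD hs (by rw [dist_eq_norm]) hP
  simp only [PiLp.sub_apply] at n1 n2 n3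
  refine aux_mem A B C P _ _ _ n1 n2 n3 ?_ ?_
  · rw [← hsum]
    field_simp
    ring
  · rw [hPv]
    ext i
    fin_cases i
    · simp only [Fin.zero_eta, PiLp.add_apply, PiLp.smul_apply, smul_eq_mul]
      have : (v 0 * (B 1 - C 1) - v 1 * (B 0 - C 0)) / D * A 0 +
        (v 0 * (C 1 - A 1) - v 1 * (C 0 - A 0)) / D * B 0 +
        (v 0 * (A 1 - B 1) - v 1 * (A 0 - B 0)) / D * C 0 = v 0 := by
        field_simp
        rw [hDdef]; ring
      linarith
    · simp only [Fin.mk_one, PiLp.add_apply, PiLp.smul_apply, smul_eq_mul]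
      have : (v 0 * (B 1 - C 1) - v 1 * (B 0 - C 0)) / D * A 1 +
        (v 0 * (C 1 - A 1) - v 1 * (C 0 - A 0)) / D * B 1 +
        (v 0 * (A 1 - B 1) - v 1 * (A 0 - B 0)) / D * C 1 = v 1 := by
        field_simp
        rw [hDdef]; ring
      linarith

theorem diameter_le_cot_mul_inradius (θ : ℝ) (hθ₀ : 0 < θ) (hθ₁ : θ ≤ π / 3)
    (A B C : EuclideanSpace ℝ (Fin 2)) (h : AffineIndependent ℝ ![A, B, C])
    (hA : θ ≤ EuclideanGeometry.angle B A C)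
    (hB : θ ≤ EuclideanGeometry.angle A B C)
    (hC : θ ≤ EuclideanGeometry.angle A C B) :
    Metric.diam (triangleRegion A B C) ≤
      2 * Real.cot (θ / 2) * triangleInradius A B C := by
  rw [affineIndependent_iff_not_collinear_set] at h
  have hD : (B 0 - A 0) * (C 1 - A 1) - (B 1 - A 1) * (C 0 - A 0) ≠ 0 := by
    intro h0
    apply h
    rw [show ({A, B, C} : Set (EuclideanSpace ℝ (Fin 2))) = {B, A, C} from Set.insert_comm _ _ _,
      EuclideanGeometry.collinear_iff_eq_or_eq_or_sin_eq_zero]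
    have := aux_sin (B -ᵥ A) (C -ᵥ A)
    simp only [vsub_eq_sub, PiLp.sub_apply, h0, abs_zero, mul_eq_zero, norm_eq_zero,
      sub_eq_zero] at this
    rw [EuclideanGeometry.angle]
    simp only [vsub_eq_sub]
    tauto
  have hAB : A ≠ B := by
    rintro rfl
    apply hD; ring
  have hs : 0 < dist B C + dist A C + dist A B := by
    have := dist_pos.2 hAB
    positivity
  obtain ⟨c, hc⟩ := aux_ball A B C hD hs
  have hcot : 0 ≤ Real.cot (θ / 2) := by
    rw [Real.cot_eq_cos_div_sin]
    exact div_nonneg (Real.cos_nonneg_of_neg_pi_div_two_le_of_le (by linarith [Real.pi_pos])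
      (by linarith [Real.pi_pos]))
      (Real.sin_nonneg_of_nonneg_of_le_pi (by linarith) (by linarith [Real.pi_pos]))
  have hbd : Bornology.IsBounded (triangleRegion A B C) := by
    rw [triangleRegion, isBounded_convexHull]
    exact (Set.toFinite _).isBounded
  have hr : |(B 0 - A 0) * (C 1 - A 1) - (B 1 - A 1) * (C 0 - A 0)| /
      (dist B C + dist A C + dist A B) ≤ triangleInradius A B C := by
    apply le_csSup
    · refine ⟨Metric.diam (triangleRegion A B C), ?_⟩
      rintro r ⟨hr0, c, hc⟩
      have h2 := Metric.diam_mono hc hbd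
      rw [diam_closedBall_eq c hr0] at h2
      linarith
    · exact ⟨by positivity, c, hc⟩
  refine le_trans ?_ (mul_le_mul_of_nonneg_left hr (by positivity))
  rw [mul_div_assoc', le_div_iff₀ hs, triangleRegion, convexHull_diam, Metric.diam_triple]
  have s1 := aux_side θ hθ₀ A B C hB hC
  have s2 := aux_side θ hθ₀ B A C hA (by rwa [EuclideanGeometry.angle_comm])
  have s3 := aux_side θ hθ₀ C A B (by rwa [EuclideanGeometry.angle_comm])
    (by rwa [EuclideanGeometry.angle_comm])
  have e2 : |(A 0 - B 0) * (C 1 - B 1) - (A 1 - B 1) * (C 0 - B 0)| =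
      |(B 0 - A 0) * (C 1 - A 1) - (B 1 - A 1) * (C 0 - A 0)| := by
    rw [← abs_neg]; congr 1; ring
  have e3 : |(A 0 - C 0) * (B 1 - C 1) - (A 1 - C 1) * (B 0 - C 0)| =
      |(B 0 - A 0) * (C 1 - A 1) - (B 1 - A 1) * (C 0 - A 0)| := by
    congr 1; ring
  rw [e2, dist_comm B A] at s2
  rw [e3, dist_comm C A, dist_comm C B] at s3
  rcases max_choice (max (dist A B) (dist A C)) (dist B C) with h' | h' <;> rw [h']
  · rcases max_choice (dist A B) (dist A C) with h' | h' <;> rw [h'] <;> linarith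
  · linarith
end

section
/- Let θ be a real number with 0 < θ ≤ π/3, and let A, B, C be affinely independent points in the Euclidean plane ℝ² such that all three interior angles of the triangle ABC are at least θ. Then the perimeter dist(A,B) + dist(B,C) + dist(C,A) of the triangle is at most 6·cot(θ/2) times the inradius of the triangle. -/
open Real EuclideanGeometry Metric

/-- planar cross product -/
def crs (u v : EuclideanSpace ℝ (Fin 2)) : ℝ := u 0 * v 1 - u 1 * v 0

lemma nsq (u : EuclideanSpace ℝ (Fin 2)) : ‖u‖ ^ 2 = u 0 ^ 2 + u 1 ^ 2 := by
  rw [EuclideanSpace.norm_sq_eq]; simp [Fin.sum_univ_two]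

lemma inn (u v : EuclideanSpace ℝ (Fin 2)) : inner ℝ u v = u 0 * v 0 + u 1 * v 1 := by
  rw [PiLp.inner_apply]; simp [Fin.sum_univ_two]; ring

lemma crs_le (u v : EuclideanSpace ℝ (Fin 2)) : |crs u v| ≤ ‖u‖ * ‖v‖ := by
  apply abs_le_of_sq_le_sq _ (by positivity)
  rw [mul_pow, nsq, nsq, crs]
  nlinarith [sq_nonneg (u 0 * v 0 + u 1 * v 1)]

lemma sin_crs (u v : EuclideanSpace ℝ (Fin 2)) :
    Real.sin (InnerProductGeometry.angle u v) * (‖u‖ * ‖v‖) = |crs u v| := by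
  rw [InnerProductGeometry.sin_angle_mul_norm_mul_norm, ← Real.sqrt_sq_eq_abs]
  congr 1
  simp only [inn, crs]; ring

lemma half (θ α : ℝ) (h0 : 0 < θ) (h1 : θ ≤ α) (h2 : α ≤ π) :
    1 + Real.cos α ≤ Real.cot (θ / 2) * Real.sin α := by
  have hs : 0 < Real.sin (θ / 2) := Real.sin_pos_of_pos_of_lt_pi (by linarith) (by linarith)
  have hd : 0 ≤ Real.sin (α / 2 - θ / 2) :=
    Real.sin_nonneg_of_nonneg_of_le_pi (by linarith) (by linarith)
  have hc : 0 ≤ Real.cos (α / 2) := Real.cos_nonneg_of_neg_pi_div_two_le_of_le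
    (by linarith) (by linarith)
  have e1 : Real.cos α = 2 * Real.cos (α / 2) ^ 2 - 1 := by
    rw [← Real.cos_two_mul]; congr 1; ring
  have e2 : Real.sin α = 2 * Real.sin (α / 2) * Real.cos (α / 2) := by
    rw [← Real.sin_two_mul]; congr 1; ring
  rw [Real.cot_eq_cos_div_sin, e1, e2, div_mul_eq_mul_div, le_div_iff₀ hs]
  rw [Real.sin_sub] at hd
  nlinarith [mul_nonneg hc hd]

lemma key (θ : ℝ) (u v : EuclideanSpace ℝ (Fin 2)) (h0 : 0 < θ)
    (h : θ ≤ InnerProductGeometry.angle u v) :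
    ‖u‖ * ‖v‖ + inner ℝ u v ≤ Real.cot (θ / 2) * |crs u v| := by
  have := half θ _ h0 h (InnerProductGeometry.angle_le_pi u v)
  rw [← sin_crs, ← InnerProductGeometry.cos_angle_mul_norm_mul_norm]
  nlinarith [mul_le_mul_of_nonneg_right this (by positivity : 0 ≤ ‖u‖ * ‖v‖)]

lemma my_wt (a P X q t : ℝ) (hP : 0 < P) (hX : X ≠ 0) (ha : 0 ≤ a) (ht : t ≤ |X| / P)
    (hq : |q| ≤ t * a) : 0 ≤ a / P + q / X := by
  have hX' : 0 < |X| := abs_pos.mpr hX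
  have : |q / X| ≤ a / P := by
    rw [abs_div, div_le_iff₀ hX']
    calc |q| ≤ t * a := hq
      _ ≤ |X| / P * a := mul_le_mul_of_nonneg_right ht ha
      _ = _ := by ring
  linarith [(abs_le.mp this).1]

lemma my_ball_sub (A B C : EuclideanSpace ℝ (Fin 2)) (hX : crs (B - A) (C - A) ≠ 0)
    (hP : 0 < dist A B + dist B C + dist C A) :
    ∃ c, closedBall c (|crs (B - A) (C - A)| / (dist A B + dist B C + dist C A)) ⊆
      triangleRegion A B C := by
  set P := dist A B + dist B C + dist C A with hPd
  set X := crs (B - A) (C - A) with hXd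
  refine ⟨(dist B C / P) • A + (dist C A / P) • B + (dist A B / P) • C, ?_⟩
  intro p hp
  rw [mem_closedBall, dist_eq_norm] at hp
  set I := (dist B C / P) • A + (dist C A / P) • B + (dist A B / P) • C with hI
  have wA := my_wt (dist B C) P X (crs (p - I) (B - C)) _ hP hX dist_nonneg hp
    (by rw [dist_eq_norm]; exact crs_le _ _)
  have wB := my_wt (dist C A) P X (crs (p - I) (C - A)) _ hP hX dist_nonneg hp
    (by rw [dist_eq_norm]; exact crs_le _ _)
  have wC := my_wt (dist A B) P X (crs (p - I) (A - B)) _ hP hX dist_nonneg hp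
    (by rw [dist_eq_norm]; exact crs_le _ _)
  have hsum : (dist B C / P + crs (p - I) (B - C) / X) + (dist C A / P + crs (p - I) (C - A) / X)
      + (dist A B / P + crs (p - I) (A - B) / X) = 1 := by
    have h1 : dist B C / P + dist C A / P + dist A B / P = 1 := by
      rw [← add_div, ← add_div, div_eq_one_iff_eq hP.ne']; rw [hPd]; ring
    have h2 : crs (p - I) (B - C) / X + crs (p - I) (C - A) / X + crs (p - I) (A - B) / X = 0 := by
      rw [← add_div, ← add_div]
      simp only [crs, PiLp.sub_apply]
      ring
    linarith
  have hp' : p = (dist B C / P + crs (p - I) (B - C) / X) • A +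
      (dist C A / P + crs (p - I) (C - A) / X) • B + (dist A B / P + crs (p - I) (A - B) / X) • C := by
    have h3 : p - I = (crs (p - I) (B - C) / X) • A + (crs (p - I) (C - A) / X) • B
        + (crs (p - I) (A - B) / X) • C := by
      generalize p - I = u
      ext i
      simp only [PiLp.add_apply, PiLp.smul_apply, smul_eq_mul]
      rw [div_mul_eq_mul_div, div_mul_eq_mul_div, div_mul_eq_mul_div, ← add_div, ← add_div,
        eq_div_iff hX, hXd]
      fin_cases i <;> simp [crs] <;> ring
    calc p = (p - I) + I := by abel
      _ = _ := by
        nth_rewrite 1 [h3]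
        nth_rewrite 4 [hI]
        module
  have hc : Convex ℝ (triangleRegion A B C) := convex_convexHull ℝ _
  have sub := subset_convexHull ℝ ({A, B, C} : Set (EuclideanSpace ℝ (Fin 2)))
  have hm := hc.sum_mem (t := Finset.univ) (w := ![dist B C / P + crs (p - I) (B - C) / X,
      dist C A / P + crs (p - I) (C - A) / X, dist A B / P + crs (p - I) (A - B) / X])
      (z := ![A, B, C]) (by intro i _; fin_cases i <;> simpa)
      (by simpa [Fin.sum_univ_three] using hsum)
      (by intro i _; apply sub; fin_cases i <;> simp)
  rw [hp']
  simpa [Fin.sum_univ_three] using hm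

lemma bdd (A B C : EuclideanSpace ℝ (Fin 2)) :
    BddAbove {r : ℝ | 0 ≤ r ∧ ∃ c : EuclideanSpace ℝ (Fin 2),
      closedBall c r ⊆ triangleRegion A B C} := by
  refine ⟨Metric.diam (triangleRegion A B C), ?_⟩
  rintro r ⟨hr, c, hc⟩
  have hb : Bornology.IsBounded (triangleRegion A B C) := by
    unfold triangleRegion
    rw [isBounded_convexHull]
    exact (Set.toFinite _).isBounded
  have h := Metric.dist_le_diam_of_mem hb
    (hc (show c + EuclideanSpace.single 0 r ∈ closedBall c r by
      simp [abs_of_nonneg hr])) (hc (mem_closedBall_self hr))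
  simpa [abs_of_nonneg hr] using h

lemma crs_ne (A B C : EuclideanSpace ℝ (Fin 2)) (h : AffineIndependent ℝ ![A, B, C]) :
    crs (B - A) (C - A) ≠ 0 := by
  intro h0
  have hne : A ≠ B := by
    intro hh
    have := h.injective.ne (show (0 : Fin 3) ≠ 1 by decide)
    exact this (by simpa using hh)
  rw [affineIndependent_iff_not_collinear_set] at h
  apply h
  rw [collinear_iff_of_mem (p₀ := A) (by simp)]
  refine ⟨B - A, ?_⟩
  have hn : ‖B - A‖ ^ 2 ≠ 0 := by
    have : B - A ≠ 0 := sub_ne_zero.mpr hne.symm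
    positivity
  rintro p (rfl | rfl | rfl)
  · exact ⟨0, by simp⟩
  · exact ⟨1, by simp⟩
  · refine ⟨inner ℝ (B - A) (p - A) / ‖B - A‖ ^ 2, ?_⟩
    rw [vadd_eq_add, ← sub_eq_iff_eq_add]
    generalize B - A = u at *
    generalize p - A = v at *
    ext i
    simp only [PiLp.smul_apply, smul_eq_mul]
    rw [div_mul_eq_mul_div, eq_div_iff hn, nsq, inn]
    unfold crs at h0
    fin_cases i
    · simp only [Fin.zero_eta]; linear_combination (-u 1) * h0
    · simp only [Fin.mk_one]; linear_combination (u 0) * h0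

/-- If all interior angles of a nondegenerate triangle are at least `θ`
(with `0 < θ ≤ π/3`), then the perimeter of the triangle is at most
`6 · cot(θ/2)` times the inradius. -/
theorem perimeter_le_cot_mul_inradius (θ : ℝ) (hθ₀ : 0 < θ) (hθ₁ : θ ≤ π / 3)
    (A B C : EuclideanSpace ℝ (Fin 2)) (h : AffineIndependent ℝ ![A, B, C])
    (hA : θ ≤ EuclideanGeometry.angle B A C)
    (hB : θ ≤ EuclideanGeometry.angle A B C)
    (hC : θ ≤ EuclideanGeometry.angle A C B) :
    dist A B + dist B C + dist C A ≤
      6 * Real.cot (θ / 2) * triangleInradius A B C := by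
  have hX := crs_ne A B C h
  have hAB : A ≠ B := by
    rintro rfl
    exact hX (by simp [crs])
  have hP : 0 < dist A B + dist B C + dist C A := by
    have := dist_pos.mpr hAB
    positivity
  obtain ⟨c, hc⟩ := my_ball_sub A B C hX hP
  have hr := le_csSup (bdd A B C) ⟨by positivity, c, hc⟩
  change _ ≤ triangleInradius A B C at hr
  have hcot : 0 ≤ Real.cot (θ / 2) := by
    rw [Real.cot_eq_cos_div_sin]
    exact div_nonneg (Real.cos_nonneg_of_neg_pi_div_two_le_of_le (by linarith) (by linarith))
      (Real.sin_nonneg_of_nonneg_of_le_pi (by linarith) (by linarith))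
  have kA := key θ (B - A) (C - A) hθ₀ hA
  have kB := key θ (A - B) (C - B) hθ₀ hB
  have kC := key θ (A - C) (B - C) hθ₀ hC
  have eB : |crs (A - B) (C - B)| = |crs (B - A) (C - A)| := by
    rw [← abs_neg]; congr 1; simp only [crs, PiLp.sub_apply]; ring
  have eC : |crs (A - C) (B - C)| = |crs (B - A) (C - A)| := by
    congr 1; simp only [crs, PiLp.sub_apply]; ring
  rw [eB] at kB
  rw [eC] at kC
  refine le_trans ?_ (mul_le_mul_of_nonneg_left hr (by positivity))
  rw [mul_div_assoc', le_div_iff₀ hP]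
  have n1 : ‖B - A‖ = dist A B := by rw [dist_comm, dist_eq_norm]
  have n2 : ‖C - A‖ = dist C A := by rw [dist_eq_norm]
  have n3 : ‖A - B‖ = dist A B := by rw [dist_eq_norm]
  have n4 : ‖C - B‖ = dist B C := by rw [dist_comm, dist_eq_norm]
  have n5 : ‖A - C‖ = dist C A := by rw [dist_comm, dist_eq_norm]
  have n6 : ‖B - C‖ = dist B C := by rw [dist_eq_norm]
  have s1 := nsq (A - B)
  have s2 := nsq (B - C)
  have s3 := nsq (C - A)
  rw [n1, n2, inn] at kA
  rw [n3, n4, inn] at kB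
  rw [n5, n6, inn] at kC
  rw [n3] at s1
  rw [n6] at s2
  rw [n2] at s3
  simp only [PiLp.sub_apply] at *
  linarith
end

section
/- Let θ be a real number with 0 < θ ≤ π/3, and let A, B, C be affinely independent points in the Euclidean plane ℝ² such that all three interior angles of the triangle ABC are at least θ. Let D denote the diameter of the triangular region, P its perimeter, and r > 0 its inradius. Then the simplicial regularity quantity (4/π)·D·P/r² + 2·D/r is at most (48/π)·cot(θ/2)² + 4·cot(θ/2). (Here (4/π)·D·P/r² is D·P divided by the area π·(r/2)² of a disk of radius r/2.) -/
open Real EuclideanGeometry Metric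

abbrev E2 := EuclideanSpace ℝ (Fin 2)

def cr (u v : E2) : ℝ := u 0 * v 1 - u 1 * v 0

lemma lagrange (u v : E2) : cr u v ^ 2 + inner ℝ u v ^ 2 = ‖u‖ ^ 2 * ‖v‖ ^ 2 := by
  rw [EuclideanSpace.real_norm_sq_eq, EuclideanSpace.real_norm_sq_eq, PiLp.inner_apply]
  simp [Fin.sum_univ_two, cr]
  ring

lemma cr_abs_le (u v : E2) : |cr u v| ≤ ‖u‖ * ‖v‖ := by
  apply abs_le_of_sq_le_sq _ (by positivity)
  nlinarith [lagrange u v, sq_nonneg (inner ℝ u v)]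

lemma key_angle (θ : ℝ) (h0 : 0 < θ) (h1 : θ ≤ π / 3) (u v : E2)
    (h : θ ≤ InnerProductGeometry.angle u v) :
    ‖u‖ * ‖v‖ + inner ℝ u v ≤ Real.cot (θ / 2) * |cr u v| := by
  set φ := InnerProductGeometry.angle u v with hφ
  have hc : inner ℝ u v = Real.cos φ * (‖u‖ * ‖v‖) :=
    (InnerProductGeometry.cos_angle_mul_norm_mul_norm u v).symm
  have hφπ : φ ≤ π := InnerProductGeometry.angle_le_pi u v
  have hs : |cr u v| = Real.sin φ * (‖u‖ * ‖v‖) := by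
    have hsn : 0 ≤ Real.sin φ := Real.sin_nonneg_of_nonneg_of_le_pi (by linarith) hφπ
    rw [← abs_of_nonneg (show 0 ≤ Real.sin φ * (‖u‖ * ‖v‖) by positivity)]
    rw [← sq_eq_sq_iff_abs_eq_abs]
    have := lagrange u v
    rw [hc] at this
    have h3 := Real.sin_sq_add_cos_sq φ
    linear_combination this - (‖u‖ * ‖v‖) ^ 2 * h3
  have hst : 0 < Real.sin (θ / 2) := Real.sin_pos_of_pos_of_lt_pi (by linarith) (by linarith)
  have hcp : 0 ≤ Real.cos (φ / 2) := Real.cos_nonneg_of_mem_Icc ⟨by linarith, by linarith⟩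
  have hd : 0 ≤ Real.sin (φ / 2 - θ / 2) :=
    Real.sin_nonneg_of_nonneg_of_le_pi (by linarith) (by linarith)
  rw [Real.sin_sub] at hd
  have e1 : Real.cos φ = 2 * Real.cos (φ / 2) ^ 2 - 1 := by
    rw [← Real.cos_two_mul]; congr 1; ring
  have e2 : Real.sin φ = 2 * Real.sin (φ / 2) * Real.cos (φ / 2) := by
    rw [← Real.sin_two_mul]; congr 1; ring
  have hk : Real.cos (φ / 2) ≤ Real.cot (θ / 2) * Real.sin (φ / 2) := by
    rw [Real.cot_eq_cos_div_sin, div_mul_eq_mul_div, le_div_iff₀ hst]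
    linarith
  rw [hs, hc, e1, e2]
  have hn : 0 ≤ 2 * Real.cos (φ / 2) * (‖u‖ * ‖v‖) := by positivity
  nlinarith [mul_le_mul_of_nonneg_left hk hn]

/-- side version at the vertex `Y` -/
lemma key_side (θ : ℝ) (h0 : 0 < θ) (h1 : θ ≤ π / 3) (X Y Z : E2)
    (h : θ ≤ EuclideanGeometry.angle X Y Z) :
    (dist X Y + dist Y Z - dist X Z) * (dist X Y + dist Y Z + dist X Z) ≤
      2 * Real.cot (θ / 2) * |cr (X - Y) (Z - Y)| := by
  have := key_angle θ h0 h1 (X - Y) (Z - Y) h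
  have e : dist X Z ^ 2 = dist X Y ^ 2 - 2 * inner ℝ (X - Y) (Z - Y) + dist Y Z ^ 2 := by
    rw [dist_comm Y Z, dist_eq_norm X Y, dist_eq_norm Z Y, ← norm_sub_sq_real, dist_eq_norm]
    congr 2; abel
  rw [← dist_eq_norm, ← dist_eq_norm, dist_comm Z Y] at this
  nlinarith

lemma tri_ball_sub (A B C : E2) (hT : cr (B - A) (C - A) ≠ 0)
    (hp : 0 < dist A B + dist B C + dist C A) :
    ∃ c : E2, closedBall c (|cr (B - A) (C - A)| / (dist A B + dist B C + dist C A)) ⊆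
      triangleRegion A B C := by
  set T := cr (B - A) (C - A) with hTd
  set a := dist B C with ha
  set b := dist C A with hb
  set c := dist A B with hc
  set p := c + a + b with hpd
  set I : E2 := (a / p) • A + (b / p) • B + (c / p) • C with hI
  have hsum : a / p + b / p + c / p = 1 := by
    field_simp; rw [hpd]; ring
  refine ⟨I, fun X hX => ?_⟩
  rw [mem_closedBall, dist_comm, dist_eq_norm] at hX
  have hTp : 0 < |T| := abs_pos.2 hT
  have aux : ∀ (U : E2) (l : ℝ), ‖U‖ = l → 0 ≤ l / p + cr (I - X) U / T := by
    intro U l hl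
    have h1 := cr_abs_le (I - X) U
    have hl0 : 0 ≤ l := hl ▸ norm_nonneg _
    have h2 : |cr (I - X) U / T| ≤ l / p := by
      rw [abs_div, div_le_iff₀ hTp]
      calc _ ≤ _ := h1
        _ ≤ (|T| / p) * l := by rw [hl]; gcongr
        _ = _ := by ring
    linarith [(abs_le.1 h2).1]
  have hA := aux (C - B) a (by rw [ha, dist_comm, dist_eq_norm])
  have hB := aux (A - C) b (by rw [hb, dist_comm, dist_eq_norm])
  have hC := aux (B - A) c (by rw [hc, dist_comm, dist_eq_norm])
  set α := a / p + cr (I - X) (C - B) / T with hα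
  set β := b / p + cr (I - X) (A - C) / T with hβ
  set γ := c / p + cr (I - X) (B - A) / T with hγ
  have h1 : α + β + γ = 1 := by
    have : cr (I - X) (C - B) / T + cr (I - X) (A - C) / T + cr (I - X) (B - A) / T = 0 := by
      rw [← add_div, ← add_div]
      simp only [cr, PiLp.sub_apply]
      ring_nf
    rw [hα, hβ, hγ]; linarith
  have key : ∀ i : Fin 2, T * X i = cr (I - X) (C - B) * A i + cr (I - X) (A - C) * B i
      + cr (I - X) (B - A) * C i + T * I i := by
    intro i
    fin_cases i <;> simp [hTd, cr] <;> ring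
  have hX2 : X = α • A + β • B + γ • C := by
    ext i
    have hIi : I i = a / p * A i + b / p * B i + c / p * C i := by simp [hI]
    have hk := key i
    have : X i = cr (I - X) (C - B) / T * A i + cr (I - X) (A - C) / T * B i
      + cr (I - X) (B - A) / T * C i + I i := by
      field_simp
      linarith
    simp only [PiLp.add_apply, PiLp.smul_apply, smul_eq_mul]
    rw [this, hIi, hα, hβ, hγ]
    ring
  have hconv := convex_convexHull ℝ ({A, B, C} : Set E2)
  have hs := subset_convexHull ℝ ({A, B, C} : Set E2)
  have := hconv.sum_mem (t := Finset.univ) (w := ![α, β, γ]) (z := ![A, B, C])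
    (by intro i _; fin_cases i <;> simpa) (by simpa [Fin.sum_univ_three] using h1)
    (by intro i _; fin_cases i <;> apply hs <;> simp)
  rw [hX2]
  simpa [Fin.sum_univ_three, triangleRegion] using this

/-- If all interior angles of a nondegenerate triangle are at least `θ`
(with `0 < θ ≤ π/3`), then the simplicial regularity quantity
`(4/π)·D·P/r² + 2·D/r` (with `D` the diameter, `P` the perimeter and `r > 0`
the inradius) is at most `(48/π)·cot(θ/2)² + 4·cot(θ/2)`. -/
theorem regularity_le_of_angle_bound (θ : ℝ) (hθ₀ : 0 < θ) (hθ₁ : θ ≤ π / 3)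
    (A B C : EuclideanSpace ℝ (Fin 2)) (h : AffineIndependent ℝ ![A, B, C])
    (hA : θ ≤ EuclideanGeometry.angle B A C)
    (hB : θ ≤ EuclideanGeometry.angle A B C)
    (hC : θ ≤ EuclideanGeometry.angle A C B)
    (D P r : ℝ)
    (hD : D = Metric.diam (triangleRegion A B C))
    (hP : P = dist A B + dist B C + dist C A)
    (hr : r = triangleInradius A B C) (hrpos : 0 < r) :
    4 / π * D * P / r ^ 2 + 2 * D / r ≤
      48 / π * Real.cot (θ / 2) ^ 2 + 4 * Real.cot (θ / 2) := by
  set K := Real.cot (θ / 2) with hK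
  have kA := key_side θ hθ₀ hθ₁ B A C hA
  have kB := key_side θ hθ₀ hθ₁ A B C hB
  have kC := key_side θ hθ₀ hθ₁ A C B hC
  have eB : |cr (A - B) (C - B)| = |cr (B - A) (C - A)| := by
    rw [← abs_neg]; congr 1; simp only [cr, PiLp.sub_apply]; ring
  have eC : |cr (A - C) (B - C)| = |cr (B - A) (C - A)| := by
    congr 1; simp only [cr, PiLp.sub_apply]; ring
  rw [eB] at kB
  rw [eC] at kC
  have hK0 : 0 < K := by
    rw [hK, Real.cot_eq_cos_div_sin]
    exact div_pos (Real.cos_pos_of_mem_Ioo ⟨by linarith, by linarith⟩)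
      (Real.sin_pos_of_pos_of_lt_pi (by linarith) (by linarith))
  have hAB : A ≠ B := by
    intro hh
    have := h.injective (a₁ := 0) (a₂ := 1) (by simpa using hh)
    simp at this
  have hc0 : 0 < dist A B := dist_pos.2 hAB
  have ha0 : 0 ≤ dist B C := dist_nonneg
  have hb0 : 0 ≤ dist C A := dist_nonneg
  have hball := tri_ball_sub A B C
  set S := cr (B - A) (C - A) with hS
  rw [dist_comm B A, dist_comm A C] at kA
  rw [dist_comm A C] at kB
  rw [dist_comm A C, dist_comm C B] at kC
  rw [← hP] at hball
  have hPpos : 0 < P := by rw [hP]; linarith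
  have sa : dist B C * P ≤ 2 * K * |S| := by rw [hP]; nlinarith
  have sb : dist C A * P ≤ 2 * K * |S| := by rw [hP]; nlinarith
  have sc : dist A B * P ≤ 2 * K * |S| := by rw [hP]; nlinarith
  have hS0 : S ≠ 0 := by
    intro hh
    rw [hh] at sc
    simp at sc
    nlinarith
  obtain ⟨c, hc⟩ := hball hS0 hPpos
  have hbdd : BddAbove {r : ℝ | 0 ≤ r ∧ ∃ c : EuclideanSpace ℝ (Fin 2),
      closedBall c r ⊆ triangleRegion A B C} := by
    by_contra hn
    have := Real.sSup_of_not_bddAbove hn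
    rw [hr, triangleInradius, this] at hrpos
    exact lt_irrefl _ hrpos
  have hρ : |S| / P ≤ r := by
    rw [hr]
    exact le_csSup hbdd ⟨by positivity, c, hc⟩
  rw [div_le_iff₀ hPpos] at hρ
  have hgen : ∀ x : ℝ, x * P ≤ 2 * K * |S| → x ≤ 2 * K * r := by
    intro x hx
    have : x * P ≤ (2 * K * r) * P := by nlinarith
    exact le_of_mul_le_mul_right this hPpos
  have ta := hgen _ sa
  have tb := hgen _ sb
  have tc := hgen _ sc
  have hM : 0 ≤ 2 * K * r := by positivity
  have hD1 : D ≤ 2 * K * r := by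
    rw [hD, triangleRegion, convexHull_diam]
    apply Metric.diam_le_of_forall_dist_le hM
    intro x hx y hy
    simp only [Set.mem_insert_iff, Set.mem_singleton_iff] at hx hy
    rcases hx with rfl | rfl | rfl <;> rcases hy with rfl | rfl | rfl <;>
      first | (rw [dist_self]; exact hM) | assumption | (rw [dist_comm]; assumption)
  have hD0 : 0 ≤ D := hD ▸ Metric.diam_nonneg
  have hP1 : P ≤ 6 * K * r := by rw [hP]; linarith
  have t1 : 4 / π * D * P / r ^ 2 ≤ 48 / π * K ^ 2 := by
    rw [div_le_iff₀ (by positivity)]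
    have : D * P ≤ (2 * K * r) * (6 * K * r) := by gcongr
    calc 4 / π * D * P = 4 / π * (D * P) := by ring
      _ ≤ 4 / π * ((2 * K * r) * (6 * K * r)) := by gcongr
      _ = _ := by ring
  have t2 : 2 * D / r ≤ 4 * K := by
    rw [div_le_iff₀ hrpos]; linarith
  linarith
end
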